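/- For any graph G on n vertices and any odd integers k ≥ t ≥ 1, (w_k(G))^t ≥ (w_t(G))^k, where w_j(G) is the number of walks of length j in G divided by n. -/

import Mathlib

/-- The number of walks of length `k` in a graph `G` on vertex set `Fin n`. -/
noncomputable def walkCount (n k : ℕ) (G : SimpleGraph (Fin n)) : ℕ :=
  Nat.card {f : Fin (k + 1) → Fin n //
    ∀ i : Fin k, G.Adj (f i.castSucc) (f i.succ)}

/-- `w_j(G)`: the number of walks of length `j` in `G` divided by `n`. -/
noncomputable def w (n j : ℕ) (G : SimpleGraph (Fin n)) : ℝ :=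
  (walkCount n j G : ℝ) / n

open Finset

section WeightedWalks

variable {V : Type*} [Fintype V]

/-- Total weight of the walks of length `k` starting at a given vertex, where the step `x → y`
has weight `A x y`. -/
noncomputable def walkWeight (A : V → V → ℝ) : ℕ → V → ℝ
  | 0, _ => 1
  | k + 1, x => ∑ y, A x y * walkWeight A k y

/-- Total weight of the walks of length `k`. -/
noncomputable def totalWalkWeight (A : V → V → ℝ) (k : ℕ) : ℝ :=
  ∑ x, walkWeight A k x

/-- Comparison of the `i`-step and `j`-step walk weights, averaged over the vertex which a
random walk of length `i + j` visits at time `i`. -/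
noncomputable def walkDrift (A : V → V → ℝ) (i j : ℕ) : ℝ :=
  ∑ x, walkWeight A i x * walkWeight A j x *
    (Real.log (walkWeight A i x) - Real.log (walkWeight A j x))

variable {A : V → V → ℝ}

lemma walkWeight_nonneg (hA : ∀ x y, 0 ≤ A x y) (k : ℕ) (x : V) : 0 ≤ walkWeight A k x := by
  induction k generalizing x with
  | zero => simp [walkWeight]
  | succ k ih => exact sum_nonneg fun y _ => mul_nonneg (hA x y) (ih y)

lemma mul_walkWeight_le (hA : ∀ x y, 0 ≤ A x y) (k : ℕ) (x y : V) :
    A x y * walkWeight A k y ≤ walkWeight A (k + 1) x :=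
  single_le_sum (f := fun y => A x y * walkWeight A k y)
    (fun z _ => mul_nonneg (hA x z) (walkWeight_nonneg hA k z)) (mem_univ y)

lemma sum_edge_left (i : ℕ) (f : V → ℝ) :
    ∑ x, ∑ y, A x y * (walkWeight A i y * f x) = ∑ x, walkWeight A (i + 1) x * f x := by
  refine sum_congr rfl fun x _ => ?_
  rw [walkWeight, sum_mul]
  exact sum_congr rfl fun y _ => by ring

lemma sum_edge_right (hs : ∀ x y, A x y = A y x) (i : ℕ) (f : V → ℝ) :
    ∑ x, ∑ y, A x y * (walkWeight A i x * f y) = ∑ x, walkWeight A (i + 1) x * f x := by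
  rw [sum_comm, ← sum_edge_left]
  exact sum_congr rfl fun x _ => sum_congr rfl fun y _ => by rw [hs]

lemma sum_walkWeight_mul (hs : ∀ x y, A x y = A y x) (i j : ℕ) :
    ∑ x, walkWeight A i x * walkWeight A j x = totalWalkWeight A (i + j) := by
  induction i generalizing j with
  | zero => simp [walkWeight, totalWalkWeight]
  | succ i ih =>
    rw [← sum_edge_right hs, show i + 1 + j = i + (j + 1) by ring, ← ih]
    simp_rw [mul_comm (walkWeight A i _) (walkWeight A (j + 1) _), ← sum_edge_left, mul_comm]

lemma sum_edge_walkWeight (hs : ∀ x y, A x y = A y x) (i j : ℕ) :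
    ∑ x, ∑ y, A x y * (walkWeight A i x * walkWeight A j y) = totalWalkWeight A (i + 1 + j) := by
  rw [sum_edge_right hs, sum_walkWeight_mul hs]

lemma totalWalkWeight_nonneg (hA : ∀ x y, 0 ≤ A x y) (k : ℕ) : 0 ≤ totalWalkWeight A k :=
  sum_nonneg fun x _ => walkWeight_nonneg hA k x

lemma mul_log_ratio_le {a u v U V c : ℝ} (ha : 0 ≤ a) (hu : 0 ≤ u) (hv : 0 ≤ v) (hU : a * u ≤ U)
    (hV : a * v ≤ V) (hc : 0 < c) :
    a * (u * v * (Real.log U - Real.log v - (Real.log u - Real.log V) - Real.log c)) ≤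
      a * (V * U / c - u * v) := by
  have hU' : 0 ≤ U := (mul_nonneg ha hu).trans hU
  have hV' : 0 ≤ V := (mul_nonneg ha hv).trans hV
  have hq : 0 ≤ V * U / c := by positivity
  rcases ha.eq_or_lt with rfl | ha
  · simp
  rcases hu.eq_or_lt with rfl | hu
  · simpa using mul_nonneg ha.le hq
  rcases hv.eq_or_lt with rfl | hv
  · simpa using mul_nonneg ha.le hq
  replace hU' : 0 < U := (mul_pos ha hu).trans_le hU
  replace hV' : 0 < V := (mul_pos ha hv).trans_le hV
  have h := Real.log_le_sub_one_of_pos (x := V * U / (c * (u * v))) (by positivity)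
  rw [Real.log_div (by positivity) (by positivity), Real.log_mul hV'.ne' hU'.ne',
    Real.log_mul hc.ne' (by positivity), Real.log_mul hu.ne' hv.ne'] at h
  have h' := mul_le_mul_of_nonneg_left h (mul_pos hu hv).le
  have e : u * v * (V * U / (c * (u * v)) - 1) = V * U / c - u * v := by field_simp
  rw [e] at h'
  refine mul_le_mul_of_nonneg_left (le_trans (le_of_eq ?_) h') ha.le
  ring

lemma totalWalkWeight_add_two_pos (hA : ∀ x y, 0 ≤ A x y) (hs : ∀ x y, A x y = A y x) {k : ℕ}
    (hpos : 0 < totalWalkWeight A (k + 1)) : 0 < totalWalkWeight A (k + 3) := by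
  obtain ⟨x, -, hx⟩ := exists_lt_of_sum_lt
    (by simpa [totalWalkWeight] using hpos : ∑ _x : V, (0 : ℝ) < ∑ x, walkWeight A (k + 1) x)
  obtain ⟨y, -, hy⟩ := exists_lt_of_sum_lt
    (by simpa [walkWeight] using hx : ∑ _y : V, (0 : ℝ) < ∑ y, A x y * walkWeight A k y)
  have hxy : 0 < A x y := (hA x y).lt_of_ne fun h => by simp [← h] at hy
  have h₁ : 0 < walkWeight A (k + 2) y :=
    (mul_pos (hs x y ▸ hxy) hx).trans_le (mul_walkWeight_le hA (k + 1) y x)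
  have h₂ : 0 < walkWeight A (k + 3) x :=
    (mul_pos hxy h₁).trans_le (mul_walkWeight_le hA (k + 2) x y)
  exact h₂.trans_le (single_le_sum (f := walkWeight A (k + 3))
    (fun z _ => walkWeight_nonneg hA _ z) (mem_univ x))

/-- Jensen's inequality for the walks of length `i + j + 3` obtained from those of length
`i + j + 1` by traversing the step at time `i` three times. -/
lemma walkDrift_sub_le (hA : ∀ x y, 0 ≤ A x y) (hs : ∀ x y, A x y = A y x) (i j : ℕ)
    (hpos : 0 < totalWalkWeight A (i + j + 1)) :
    walkDrift A (i + 1) j - walkDrift A i (j + 1) ≤ totalWalkWeight A (i + j + 1) *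
      Real.log (totalWalkWeight A (i + j + 3) / totalWalkWeight A (i + j + 1)) := by
  set c := totalWalkWeight A (i + j + 3) / totalWalkWeight A (i + j + 1) with hc
  have hpos' := totalWalkWeight_add_two_pos hA hs hpos
  have hc0 : 0 < c := div_pos hpos' hpos
  have key : ∑ x, ∑ y, A x y * (walkWeight A i x * walkWeight A j y *
      (Real.log (walkWeight A (i + 1) y) - Real.log (walkWeight A j y) -
        (Real.log (walkWeight A i x) - Real.log (walkWeight A (j + 1) x)) - Real.log c)) ≤
      ∑ x, ∑ y, A x y * (walkWeight A (j + 1) x * walkWeight A (i + 1) y / c -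
        walkWeight A i x * walkWeight A j y) :=
    sum_le_sum fun x _ => sum_le_sum fun y _ =>
      mul_log_ratio_le (hA x y) (walkWeight_nonneg hA i x) (walkWeight_nonneg hA j y)
        (hs y x ▸ mul_walkWeight_le hA i y x) (mul_walkWeight_le hA j x y) hc0
  have hr : ∑ x, ∑ y, A x y * (walkWeight A (j + 1) x * walkWeight A (i + 1) y / c -
        walkWeight A i x * walkWeight A j y) = 0 := by
    simp_rw [mul_sub, sum_sub_distrib, ← mul_div_assoc, ← sum_div, sum_edge_walkWeight hs]
    rw [show j + 1 + 1 + (i + 1) = i + j + 3 by ring, show i + 1 + j = i + j + 1 by ring, hc]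
    field_simp
    simp
  have h₁ := sum_edge_right hs i fun y => walkWeight A j y *
    (Real.log (walkWeight A (i + 1) y) - Real.log (walkWeight A j y))
  have h₂ := sum_edge_left (A := A) j fun x => walkWeight A i x *
    (Real.log (walkWeight A i x) - Real.log (walkWeight A (j + 1) x))
  have h₃ := sum_edge_walkWeight hs i j
  have hl : ∑ x, ∑ y, A x y * (walkWeight A i x * walkWeight A j y *
      (Real.log (walkWeight A (i + 1) y) - Real.log (walkWeight A j y) -
        (Real.log (walkWeight A i x) - Real.log (walkWeight A (j + 1) x)) - Real.log c)) =
      walkDrift A (i + 1) j - walkDrift A i (j + 1) -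
        totalWalkWeight A (i + j + 1) * Real.log c := by
    rw [show i + j + 1 = i + 1 + j by ring, ← h₃]
    have e₁ : walkDrift A (i + 1) j = ∑ x, walkWeight A (i + 1) x * (walkWeight A j x *
        (Real.log (walkWeight A (i + 1) x) - Real.log (walkWeight A j x))) :=
      sum_congr rfl fun x _ => by ring
    have e₂ : walkDrift A i (j + 1) = ∑ x, walkWeight A (j + 1) x * (walkWeight A i x *
        (Real.log (walkWeight A i x) - Real.log (walkWeight A (j + 1) x))) :=
      sum_congr rfl fun x _ => by ring
    rw [e₁, e₂, ← h₁, ← h₂]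
    simp_rw [sum_mul, ← sum_sub_distrib]
    exact sum_congr rfl fun x _ => sum_congr rfl fun y _ => by ring
  linarith

lemma walkDrift_sub_walkDrift_le (hA : ∀ x y, 0 ≤ A x y) (hs : ∀ x y, A x y = A y x) {t i j : ℕ}
    (hij : i + j = t) (hpos : 0 < totalWalkWeight A t) :
    walkDrift A i j - walkDrift A 0 t ≤ i * (totalWalkWeight A t *
      Real.log (totalWalkWeight A (t + 2) / totalWalkWeight A t)) := by
  induction i generalizing j with
  | zero =>
    obtain rfl : j = t := by omega
    simp
  | succ i ih =>
    have h := ih (j := j + 1) (by omega)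
    obtain rfl : t = i + j + 1 := by omega
    have h' := walkDrift_sub_le hA hs i j hpos
    push_cast
    linarith

/-- The entropy of a distribution on `V` is at most `log (card V)`, in unnormalised form. -/
lemma sum_mul_log_div_card_le (f : V → ℝ) (hf : ∀ x, 0 ≤ f x) (hpos : 0 < ∑ x, f x) :
    (∑ x, f x) * Real.log ((∑ x, f x) / Fintype.card V) ≤ ∑ x, f x * Real.log (f x) := by
  have hne : Nonempty V := by
    by_contra h
    rw [not_nonempty_iff] at h
    simp at hpos
  have hcard : (0 : ℝ) < Fintype.card V := by exact_mod_cast Fintype.card_pos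
  set m := (∑ x, f x) / Fintype.card V with hm
  have hm0 : 0 < m := div_pos hpos hcard
  have h : ∀ x, f x * (Real.log m - Real.log (f x)) ≤ m - f x := by
    intro x
    rcases (hf x).eq_or_lt with h | h
    · simpa [← h] using hm0.le
    · have h₁ := mul_le_mul_of_nonneg_left
        (Real.log_le_sub_one_of_pos (div_pos hm0 h)) h.le
      rw [Real.log_div hm0.ne' h.ne'] at h₁
      refine h₁.trans (le_of_eq ?_)
      field_simp
  have hsum := sum_le_sum fun x (_ : x ∈ (univ : Finset V)) => h x
  simp_rw [mul_sub, sum_sub_distrib, ← sum_mul] at hsum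
  have hc : ∑ _x : V, m = ∑ x, f x := by
    rw [sum_const, card_univ, nsmul_eq_mul, hm]
    field_simp
  linarith

lemma totalWalkWeight_pow_le (hA : ∀ x y, 0 ≤ A x y) (hs : ∀ x y, A x y = A y x) {t : ℕ}
    (ht : 1 ≤ t) :
    (totalWalkWeight A t / Fintype.card V) ^ (t + 2) ≤
      (totalWalkWeight A (t + 2) / Fintype.card V) ^ t := by
  rcases (totalWalkWeight_nonneg hA t).eq_or_lt with h0 | hpos
  · rw [← h0, zero_div, zero_pow (by omega)]
    exact pow_nonneg (div_nonneg (totalWalkWeight_nonneg hA _) (Nat.cast_nonneg _)) _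
  have hpos' : 0 < totalWalkWeight A (t + 2) := by
    obtain ⟨k, rfl⟩ := Nat.exists_eq_add_of_le' ht
    exact totalWalkWeight_add_two_pos hA hs hpos
  have hne : Nonempty V := by
    by_contra h
    rw [not_nonempty_iff] at h
    simp [totalWalkWeight] at hpos
  have hcard : (0 : ℝ) < Fintype.card V := by exact_mod_cast Fintype.card_pos
  have h₁ := walkDrift_sub_walkDrift_le hA hs (add_zero t) hpos
  have h₂ := sum_mul_log_div_card_le (walkWeight A t) (walkWeight_nonneg hA t) hpos
  have e₁ : walkDrift A t 0 = ∑ x, walkWeight A t x * Real.log (walkWeight A t x) := by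
    simp [walkDrift, walkWeight]
  have e₂ : walkDrift A 0 t = -∑ x, walkWeight A t x * Real.log (walkWeight A t x) := by
    simp [walkDrift, walkWeight]
  change totalWalkWeight A t * Real.log (totalWalkWeight A t / Fintype.card V) ≤ _ at h₂
  have h₃ : 2 * Real.log (totalWalkWeight A t / Fintype.card V) ≤
      t * Real.log (totalWalkWeight A (t + 2) / totalWalkWeight A t) := by
    refine le_of_mul_le_mul_left ?_ hpos
    rw [e₁, e₂] at h₁
    linarith
  rw [← Real.log_le_log_iff (by positivity) (by positivity), Real.log_pow, Real.log_pow,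
    Real.log_div hpos'.ne' hcard.ne']
  rw [Real.log_div hpos'.ne' hpos.ne'] at h₃
  rw [Real.log_div hpos.ne' hcard.ne'] at h₃ ⊢
  push_cast
  linarith

lemma sum_prod_walk (A : V → V → ℝ) (k : ℕ) (g : V → ℝ) :
    ∑ f : Fin (k + 1) → V, g (f 0) * ∏ i : Fin k, A (f i.castSucc) (f i.succ) =
      ∑ x, g x * walkWeight A k x := by
  induction k generalizing g with
  | zero =>
    simpa [walkWeight] using (Equiv.funUnique (Fin 1) V).sum_comp g
  | succ k ih =>
    rw [← (Fin.consEquiv fun _ => V).sum_comp, Fintype.sum_prod_type]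
    refine sum_congr rfl fun x _ => ?_
    rw [walkWeight, ← ih, mul_sum]
    refine sum_congr rfl fun f _ => ?_
    simp [Fin.consEquiv, Fin.prod_univ_succ]

end WeightedWalks

lemma walkCount_eq_totalWalkWeight (n k : ℕ) (G : SimpleGraph (Fin n)) [DecidableRel G.Adj] :
    (walkCount n k G : ℝ) = totalWalkWeight (fun x y => if G.Adj x y then 1 else 0) k := by
  have h := sum_prod_walk (fun x y => if G.Adj x y then (1 : ℝ) else 0) k fun _ => 1
  simp only [one_mul] at h
  rw [totalWalkWeight, ← h, walkCount, Nat.card_eq_fintype_card, Fintype.card_subtype,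
    card_filter]
  push_cast
  exact sum_congr rfl fun f _ => by simp [prod_ite_zero]

lemma w_nonneg (n k : ℕ) (G : SimpleGraph (Fin n)) : 0 ≤ w n k G :=
  div_nonneg (Nat.cast_nonneg _) (Nat.cast_nonneg _)

lemma w_pow_add_two_le (n : ℕ) {t : ℕ} (ht : 1 ≤ t) (G : SimpleGraph (Fin n)) :
    w n t G ^ (t + 2) ≤ w n (t + 2) G ^ t := by
  classical
  have h := totalWalkWeight_pow_le (A := fun x y => if G.Adj x y then (1 : ℝ) else 0)
    (fun x y => by split_ifs <;> norm_num) (fun x y => by simp [G.adj_comm]) ht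
  simpa [w, walkCount_eq_totalWalkWeight] using h

lemma w_pow_add_two_mul_le (n : ℕ) {t : ℕ} (ht : 1 ≤ t) (G : SimpleGraph (Fin n)) (m : ℕ) :
    w n t G ^ (t + 2 * m) ≤ w n (t + 2 * m) G ^ t := by
  induction m with
  | zero => simp
  | succ m ih =>
    have hs : t + 2 * m ≠ 0 := by omega
    have h := w_pow_add_two_le n (t := t + 2 * m) (by omega) G
    rw [show t + 2 * (m + 1) = t + 2 * m + 2 by ring]
    refine le_of_pow_le_pow_left₀ hs (pow_nonneg (w_nonneg _ _ _) _) ?_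
    calc (w n t G ^ (t + 2 * m + 2)) ^ (t + 2 * m)
        = (w n t G ^ (t + 2 * m)) ^ (t + 2 * m + 2) := pow_right_comm _ _ _
      _ ≤ (w n (t + 2 * m) G ^ t) ^ (t + 2 * m + 2) :=
        pow_le_pow_left₀ (pow_nonneg (w_nonneg _ _ _) _) ih _
      _ = (w n (t + 2 * m) G ^ (t + 2 * m + 2)) ^ t := pow_right_comm _ _ _
      _ ≤ (w n (t + 2 * m + 2) G ^ (t + 2 * m)) ^ t :=
        pow_le_pow_left₀ (pow_nonneg (w_nonneg _ _ _) _) h _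
      _ = (w n (t + 2 * m + 2) G ^ t) ^ (t + 2 * m) := pow_right_comm _ _ _

/-- Erdős–Simonovits conjecture: for odd `k ≥ t ≥ 1`,
`w_k(G)^t ≥ w_t(G)^k`. -/
theorem erdos_simonovits (n k t : ℕ) (G : SimpleGraph (Fin n))
    (hk : Odd k) (ht : Odd t) (ht1 : 1 ≤ t) (htk : t ≤ k) :
    w n k G ^ t ≥ w n t G ^ k := by
  obtain ⟨m, rfl⟩ : ∃ m, k = t + 2 * m := by
    obtain ⟨a, rfl⟩ := hk
    obtain ⟨b, rfl⟩ := ht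
    exact ⟨a - b, by omega⟩
  exact w_pow_add_two_mul_le n ht1 G m
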